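/- Let b = (b₁,…,b₆) ∈ ℤ⁶ satisfy b₁, b₂, b₅, b₆ ≥ 2, b₁ < b₂, b₅ < b₆ and b₄ ≤ b₃, and suppose that M(b) is positive definite with det M(b) = 1. Then b₄ = 1, 2 ≤ b₃ ≤ 7, b₁ ≤ 23, b₂ ≤ 133, b₅ ≤ 13 and b₆ ≤ 97. -/

import Mathlib

/-- The linking matrix of the `H`-graph. -/
def Mb (b : Fin 6 → ℤ) : Matrix (Fin 6) (Fin 6) ℤ :=
  !![b 0,    0,   -1,    0,    0,    0;
        0, b 1,   -1,    0,    0,    0;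
       -1,   -1, b 2,   -1,    0,    0;
        0,    0,   -1, b 3,   -1,   -1;
        0,    0,    0,   -1, b 4,    0;
        0,    0,    0,   -1,    0, b 5]

lemma hg_det (b : Fin 6 → ℤ) : (Mb b).det =
    (b 0 * b 1 * b 2 - b 0 - b 1) * (b 3 * b 4 * b 5 - b 4 - b 5) - b 0 * b 1 * (b 4 * b 5) := by
  simp [Mb, Matrix.det_succ_row_zero, Fin.sum_univ_succ, Fin.succAbove]
  ring

lemma hg_form (b : Fin 6 → ℤ) (hpos : ((Mb b).map ((↑·) : ℤ → ℝ)).PosDef)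
    (x : Fin 6 → ℤ) (hx : x ≠ 0) :
    0 < b 0 * x 0 ^ 2 + b 1 * x 1 ^ 2 + b 2 * x 2 ^ 2 + b 3 * x 3 ^ 2 + b 4 * x 4 ^ 2
      + b 5 * x 5 ^ 2 - 2 * x 0 * x 2 - 2 * x 1 * x 2 - 2 * x 2 * x 3 - 2 * x 3 * x 4
      - 2 * x 3 * x 5 := by
  have h := hpos.dotProduct_mulVec_pos (x := fun i => (x i : ℝ)) (by
    intro h0
    apply hx
    funext i
    have := congrFun h0 i
    simpa using this)
  have e : (star (fun i => (x i : ℝ))) ⬝ᵥ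
      (((Mb b).map ((↑·) : ℤ → ℝ)).mulVec (fun i => (x i : ℝ))) =
      ((b 0 * x 0 ^ 2 + b 1 * x 1 ^ 2 + b 2 * x 2 ^ 2 + b 3 * x 3 ^ 2 + b 4 * x 4 ^ 2
      + b 5 * x 5 ^ 2 - 2 * x 0 * x 2 - 2 * x 1 * x 2 - 2 * x 2 * x 3 - 2 * x 3 * x 4
      - 2 * x 3 * x 5 : ℤ) : ℝ) := by
    simp [Mb, dotProduct, Matrix.mulVec, Fin.sum_univ_six]
    ring
  rw [e] at h
  exact_mod_cast h

def hgOK (c e a : ℕ) : Bool :=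
  decide (2 ≤ a → a * e < (a * c - 1) * (e - 1) →
    ((a * c - 1) * (e - 1) - a * e) + (a * e) ^ 2 +
      a * (e - 1) * (((a * c - 1) * (e - 1) - a * e) *
        (max (e + 1) ((a * c - 1) * e / ((a * c - 1) * (e - 1) - a * e) + 1)) - (a * c - 1) * e)
      < 134 * ((a * c - 1) * (e - 1) - a * e) * (((a * c - 1) * (e - 1) - a * e) *
        (max (e + 1) ((a * c - 1) * e / ((a * c - 1) * (e - 1) - a * e) + 1)) - (a * c - 1) * e)
    ∧ ((a * c - 1) * (e - 1) - a * e) + (a * e) ^ 2 +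
      (a * c - 1) * e * (((a * c - 1) * (e - 1) - a * e) *
        (max (a + 1) (a * (e - 1) / ((a * c - 1) * (e - 1) - a * e) + 1)) - a * (e - 1))
      < 98 * ((a * c - 1) * (e - 1) - a * e) * (((a * c - 1) * (e - 1) - a * e) *
        (max (a + 1) (a * (e - 1) / ((a * c - 1) * (e - 1) - a * e) + 1)) - a * (e - 1)))

lemma hg_check : ∀ c : ℕ, c < 8 → ∀ e : ℕ, e < 14 → ∀ a : ℕ, a < 24 → 2 ≤ c → 2 ≤ e →
    hgOK c e a = true := by
  decide +kernel

lemma hg_contra {A B C N b f f0 k : ℕ} (hk : N + C * (A * f0 - B) < k * A * (A * f0 - B))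
    (hf : f0 ≤ f) (hb : k ≤ b) (h : ((A : ℤ) * b - C) * (A * f - B) = N) : False := by
  have hB : B < A * f0 := by
    by_contra hh
    have : A * f0 - B = 0 := by omega
    rw [this] at hk
    simp at hk
  zify [hB.le] at hk hB hf hb
  have h1 : (A : ℤ) * f0 ≤ A * f := by nlinarith
  have h2 : (A : ℤ) * k ≤ A * b := by nlinarith
  have h3 : 0 < (A : ℤ) * k - C := by
    by_contra hh
    have := mul_nonneg (by linarith : 0 ≤ C - (A : ℤ) * k) (by linarith : 0 ≤ (A : ℤ) * f0 - B)
    have hN : (0 : ℤ) ≤ N := by positivity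
    nlinarith
  have := mul_le_mul (by linarith : (A : ℤ) * k - C ≤ A * b - C)
    (by linarith : (A : ℤ) * f0 - B ≤ A * f - B) (by linarith) (by linarith)
  nlinarith

set_option maxHeartbeats 4000000 in
lemma hg_main (a b c d e f : ℤ) (h1 : 2 ≤ a) (h12 : a < b) (h5 : 2 ≤ e) (h56 : e < f)
    (h43 : d ≤ c) (hP : 0 < a * b * c - a - b) (hQ : 0 < d * e * f - e - f)
    (hdet : (a * b * c - a - b) * (d * e * f - e - f) - a * b * (e * f) = 1) :
    d = 1 ∧ 2 ≤ c ∧ c ≤ 7 ∧ a ≤ 23 ∧ b ≤ 133 ∧ e ≤ 13 ∧ f ≤ 97 := by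
  have hab : 6 ≤ a * b := by nlinarith
  have hef : 6 ≤ e * f := by nlinarith
  have hab5 : 6 * (a + b) ≤ 5 * (a * b) := by
    nlinarith [mul_nonneg (by linarith : 0 ≤ a - 2) (by linarith : 0 ≤ b - 3)]
  have hef5 : 6 * (e + f) ≤ 5 * (e * f) := by
    nlinarith [mul_nonneg (by linarith : 0 ≤ e - 2) (by linarith : 0 ≤ f - 3)]
  obtain ⟨p, hp⟩ : ∃ p, p = a * b := ⟨_, rfl⟩
  obtain ⟨q, hq⟩ : ∃ q, q = e * f := ⟨_, rfl⟩
  have hd0 : 1 ≤ d := by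
    by_contra hh
    have : d * (e * f) ≤ 0 := by nlinarith
    nlinarith
  have hd : d = 1 := by
    by_contra hh
    have hd2 : 2 ≤ d := by omega
    have hP2 : 7 * (a * b) ≤ 6 * (a * b * c - a - b) := by nlinarith
    have hQ2 : 7 * (e * f) ≤ 6 * (d * e * f - e - f) := by nlinarith
    have := mul_le_mul hP2 hQ2 (by linarith) (by linarith)
    nlinarith [mul_le_mul hab hef (by norm_num) (by linarith)]
  subst hd
  rw [one_mul] at hQ hdet
  have hc2 : 2 ≤ c := by
    by_contra hh
    have : c = 1 := by omega
    subst this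
    nlinarith
  have hQ1 : e * f ≤ 6 * (e * f - e - f) := by linarith
  have hc7 : c ≤ 7 := by
    by_contra hh
    have hP2 : 43 * (a * b) ≤ 6 * (a * b * c - a - b) := by nlinarith
    have := mul_le_mul hP2 hQ1 (by linarith) (by linarith)
    nlinarith [mul_le_mul hab hef (by norm_num) (by linarith)]
  have he : e ≤ 13 := by
    by_contra hh
    have hP2 : 7 * (a * b) ≤ 6 * (a * b * c - a - b) := by nlinarith
    have h3 := mul_le_mul_of_nonneg_right hP2 hQ.le
    have h4 : 2 ≤ e * f - 7 * e - 7 * f := by nlinarith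
    have h5 := mul_le_mul hab h4 (by norm_num) (by linarith)
    nlinarith
  have ha : a ≤ 23 := by
    by_contra hh
    have hab' : 600 * (a + b) ≤ 49 * (a * b) := by
      nlinarith [mul_nonneg (by linarith : 0 ≤ a - 24) (by linarith : 0 ≤ b - 25)]
    have hab6 : 600 ≤ a * b := by nlinarith
    have hP2 : (600 * c - 49) * (a * b) ≤ 600 * (a * b * c - a - b) := by nlinarith
    have h3 := mul_le_mul_of_nonneg_right hP2 hQ.le
    have h4 : (600 * c - 49) * (e * f - e - f) ≤ 600 * (e * f) + 1 := by
      by_contra h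
      have := mul_le_mul hab6 (by linarith : 2 ≤ (600 * c - 49) * (e * f - e - f) - 600 * (e * f))
        (by norm_num) (by linarith)
      nlinarith
    have h5 : e * f < c * (e * f - e - f) := by
      by_contra h
      have := mul_nonneg (by linarith : 0 ≤ a * b) (by linarith : 0 ≤ e * f - c * (e * f - e - f))
      nlinarith [mul_pos (by linarith : 0 < a + b) hQ]
    clear hdet h3 hP2 hab' hab6 hP hab5 hab hp hq
    interval_cases c <;> interval_cases e <;> omega
  have hid : (((a * c - 1) * (e - 1) - a * e) * b - a * (e - 1)) *
      (((a * c - 1) * (e - 1) - a * e) * f - (a * c - 1) * e) =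
      ((a * c - 1) * (e - 1) - a * e) + (a * e) ^ 2 := by
    linear_combination ((a * c - 1) * (e - 1) - a * e) * hdet
  have hA : a * e < (a * c - 1) * (e - 1) := by
    by_contra h
    have h3 := mul_nonneg (by linarith : 0 ≤ a * e - (a * c - 1) * (e - 1))
      (by nlinarith : 0 ≤ b * f)
    have h4 : 0 < (a * c - 1) * e * b - a * e := by
      have g1 : a ≤ a * c - 1 := by nlinarith
      have g2 : a * (e * b) ≤ (a * c - 1) * (e * b) :=
        mul_le_mul_of_nonneg_right g1 (mul_nonneg (by linarith) (by linarith))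
      have g3 : 0 < (a * e) * (b - 1) :=
        mul_pos (mul_pos (by linarith) (by linarith)) (by linarith)
      linarith
    have h5 : 0 < a * (e - 1) * f := by
      have : 0 < e - 1 := by linarith
      have : 0 < f := by linarith
      positivity
    linarith
  have hv : (a * c - 1) * e < ((a * c - 1) * (e - 1) - a * e) * f := by
    by_contra h
    have h3 := mul_nonneg (by linarith : 0 ≤ (a * c - 1) * e - ((a * c - 1) * (e - 1) - a * e) * f)
      (by linarith : 0 ≤ b)
    have h4 : a * e ≤ a * (e - 1) * f := by
      have : e ≤ (e - 1) * f := by nlinarith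
      nlinarith
    linarith
  have hu : a * (e - 1) < ((a * c - 1) * (e - 1) - a * e) * b := by
    by_contra h
    have h3 := mul_nonneg (by linarith : 0 ≤ a * (e - 1) - ((a * c - 1) * (e - 1) - a * e) * b)
      (by linarith : 0 ≤ ((a * c - 1) * (e - 1) - a * e) * f - (a * c - 1) * e)
    linarith [sq_nonneg (a * e)]
  clear hp hq hP hQ hdet
  lift a to ℕ using by linarith
  lift b to ℕ using by linarith
  lift c to ℕ using by linarith
  lift e to ℕ using by linarith
  lift f to ℕ using by linarith
  have hac : 1 ≤ a * c := by
    have : 1 ≤ (a : ℤ) * c := by nlinarith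
    exact_mod_cast this
  have he1 : 1 ≤ e := by omega
  have hA' : a * e < (a * c - 1) * (e - 1) := by zify [hac, he1]; exact hA
  obtain ⟨k1, k2⟩ := of_decide_eq_true
    (hg_check c (by omega) e (by omega) a (by omega) (by omega) (by omega)) (by omega) hA'
  have cA : (((a * c - 1) * (e - 1) - a * e : ℕ) : ℤ) =
      ((a : ℤ) * c - 1) * (e - 1) - a * e := by
    push_cast [hac, he1, hA'.le]; ring
  have cB : (((a * c - 1) * e : ℕ) : ℤ) = ((a : ℤ) * c - 1) * e := by
    push_cast [hac]; ring
  have cC : ((a * (e - 1) : ℕ) : ℤ) = (a : ℤ) * (e - 1) := by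
    push_cast [he1]; ring
  have cN : ((((a * c - 1) * (e - 1) - a * e) + (a * e) ^ 2 : ℕ) : ℤ) =
      ((a : ℤ) * c - 1) * (e - 1) - a * e + (a * e) ^ 2 := by
    rw [Nat.cast_add, cA]; push_cast; ring
  have hA0 : 0 < (a * c - 1) * (e - 1) - a * e := by omega
  rw [← cN, ← cA, ← cB, ← cC] at hid
  rw [← cA, ← cB] at hv
  rw [← cA, ← cC] at hu
  refine ⟨rfl, hc2, hc7, ha, ?_, he, ?_⟩
  · by_contra hb
    refine hg_contra k1 (f := f) (b := b) ?_ (by omega) hid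
    refine max_le (by omega) ?_
    exact (Nat.div_lt_iff_lt_mul hA0).2 (by rw [mul_comm f]; exact_mod_cast hv)
  · by_contra hb
    refine hg_contra k2 (f := b) (b := f) ?_ (by omega) (by rw [mul_comm]; exact hid)
    refine max_le (by omega) ?_
    exact (Nat.div_lt_iff_lt_mul hA0).2 (by rw [mul_comm b]; exact_mod_cast hu)

theorem hgraph_bounds (b : Fin 6 → ℤ)
    (h1 : 2 ≤ b 0) (h2 : 2 ≤ b 1) (h5 : 2 ≤ b 4) (h6 : 2 ≤ b 5)
    (h12 : b 0 < b 1) (h56 : b 4 < b 5) (h43 : b 3 ≤ b 2)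
    (hpos : ((Mb b).map ((↑·) : ℤ → ℝ)).PosDef)
    (hdet : (Mb b).det = 1) :
    b 3 = 1 ∧ 2 ≤ b 2 ∧ b 2 ≤ 7 ∧ b 0 ≤ 23 ∧ b 1 ≤ 133 ∧ b 4 ≤ 13 ∧ b 5 ≤ 97 := by
  rw [hg_det] at hdet
  have p1 : 0 < b 0 * b 1 := by positivity
  have p2 : 0 < b 4 * b 5 := by positivity
  have hP := hg_form b hpos ![b 1, b 0, b 0 * b 1, 0, 0, 0] (by
    intro h
    have := congrFun h 0
    simp at this
    omega)
  have hQ := hg_form b hpos ![0, 0, 0, b 4 * b 5, b 5, b 4] (by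
    intro h
    have := congrFun h 4
    simp at this
    omega)
  simp at hP hQ
  refine hg_main _ _ _ _ _ _ h1 h12 h5 h56 h43 ?_ ?_ hdet
  · refine pos_of_mul_pos_right (a := b 0 * b 1) ?_ p1.le
    linarith
  · refine pos_of_mul_pos_right (a := b 4 * b 5) ?_ p2.le
    linarith
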